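/- Let n ≥ k-1, let 1 ≤ r ≤ k-1, and let w ∈ Ω_n^r be a singular n-word of the r-th kind. Then any two distinct occurrences of w in 𝐬 are positively separated: if w occurs at positions p and q in 𝐬 with p < q, then q > p + |w|. -/

import Mathlib

/-!
Let `ψ_b` be the morphism `b ↦ b`, `c ↦ bc` (`c ≠ b`). The word `s_n` is the image of
`a_{n+1}` under the composition `h_n` directed by `a_1^{d_1} ⋯ a_n^{d_n}` (letters read
cyclically), and `D_{m-1}` is the palindromic prefix directed by
`a_1^{d_1} ⋯ a_{m-1}^{d_{m-1}} a_m^{d_m - 1}` (`Psi_seg`, `Pal_append_replicate`).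

Put `m = n - r + 1` and `y = a_m`. Since `s_n` starts with `D_{m-1} y` (`D_letter_pre`), the
word `G_{n,r}` starts with `y`, and every window of length `|s_n|` in the trimmed
`reverse(G) D_{m-1} G` contains the marker `y D_{m-1} y` at its centre (`window_contains`). It
therefore suffices to separate the occurrences of the marker.

Desubstituting the directive word of `D_{m-1}` turns an occurrence of the marker into an
occurrence of `yy` (`Desub_pair`). Undoing one more `ψ_y` turns `yy` into a single `y`, and the
remaining letters `a_{m+1}, …, a_n` of the directive word of `h_n` are different from `y`
because `r ≤ k - 1`; hence the marker occurs only at the ends of the blocks `h_n(y)`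
(`Desub_mark`). The word underlying `h_n` is itself a `ψ_x`-image with `x = a_{n+1} ≠ y`, so two
letters `y` in it have an `x` in between (`separating`). The two markers are thus at distance
at least `|h_n(x)| + |h_n(y)| > |s_n|` (`marker_gap`).
-/

namespace Epi

variable {α : Type*}

/-- `pw w p` is the `p`-fold concatenation `w^p`. -/
def pw (w : List α) : ℕ → List α
  | 0 => []
  | p + 1 => w ++ pw w p

/-- `S k a d m` is the word `s_{m-(k-1)}` of the paper (shifted indexing: `m : ℕ`
ranges over the indices `n ≥ 1-k`). -/
def S (k : ℕ) (a : ℕ → α) (d : ℕ → ℕ) : ℕ → List α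
  | m =>
    if h : m < max k 1 then [a ((m + 1) % k + 1)]
    else
      ((List.range (k - 1)).map
          (fun j => pw (S k a d (m - 1 - j)) (d (m + 1 - k - j)))).flatten ++
        S k a d (m - max k 1)
  termination_by m => m
  decreasing_by all_goals omega

/-- `s k a d n` is the word `s_n`, for `n ≥ 0`. -/
def s (k : ℕ) (a : ℕ → α) (d : ℕ → ℕ) (n : ℕ) : List α :=
  S k a d (n + (k - 1))

/-- `D k a d n` is the word `D_n = s_n^{d_{n+1}-1} s_{n-1}^{d_n} ⋯ s_1^{d_2} s_0^{d_1}`. -/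
def D (k : ℕ) (a : ℕ → α) (d : ℕ → ℕ) (n : ℕ) : List α :=
  pw (s k a d n) (d (n + 1) - 1) ++
    ((List.range n).map (fun j => pw (s k a d (n - 1 - j)) (d (n - j)))).flatten

/-- `G k a d n r` is the word `G_{n,r}`: `s_n` with its prefix of length `|D_{n-r}|` removed. -/
def G (k : ℕ) (a : ℕ → α) (d : ℕ → ℕ) (n r : ℕ) : List α :=
  (s k a d n).drop (D k a d (n - r)).length

/-- `Om k a d n r` is the set `Ω_n^r` of singular `n`-words of the `r`-th kind. -/
def Om (k : ℕ) (a : ℕ → α) (d : ℕ → ℕ) (n r : ℕ) : Set (List α) :=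
  { w | w.length = (s k a d n).length ∧
      w <:+:
        ((((G k a d n r).reverse ++ D k a d (n - r) ++ G k a d n r).drop 1).dropLast) }

/-- `w` is a factor of the infinite word `𝐬`. -/
def FactorS (k : ℕ) (a : ℕ → α) (d : ℕ → ℕ) (w : List α) : Prop :=
  ∃ N, w <:+: s k a d N

/-! ### Episturmian morphisms -/

open Classical in
/-- The elementary episturmian morphism `ψ_b`: `b ↦ b` and `c ↦ bc` for `c ≠ b`. -/
noncomputable def psi (b : α) (w : List α) : List α :=
  w.flatMap (fun c => if c = b then [b] else [b, c])

/-- The composition `ψ_{u_1} ∘ ψ_{u_2} ∘ ⋯` along a directive word `u`. -/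
noncomputable def Psi (u : List α) (w : List α) : List α := u.foldr psi w

/-- The palindromic prefix directed by `u` (iterated palindromic closure), computed
through `Pal (bu) = ψ_b (Pal u) b`. -/
noncomputable def Pal : List α → List α
  | [] => []
  | b :: u => psi b (Pal u) ++ [b]

@[simp] lemma psi_nil (b : α) : psi b [] = [] := rfl

@[simp] lemma psi_append (b : α) (v w : List α) : psi b (v ++ w) = psi b v ++ psi b w := by
  simp [psi]

lemma psi_cons_self (b : α) (w : List α) : psi b (b :: w) = b :: psi b w := by
  simp [psi]

lemma psi_cons_ne {b c : α} (h : c ≠ b) (w : List α) :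
    psi b (c :: w) = b :: c :: psi b w := by
  simp [psi, h]

lemma psi_head {b c : α} {g B : List α} (h : psi b g = c :: B) : c = b := by
  cases g with
  | nil => simp at h
  | cons z g =>
    by_cases hz : z = b
    · subst hz; rw [psi_cons_self] at h; simp at h; exact h.1.symm
    · rw [psi_cons_ne hz] at h; simp at h; exact h.1.symm

lemma psi_append_cons_head (b : α) (W R : List α) :
    ∃ R', psi b W ++ b :: R = b :: R' := by
  cases h : psi b W with
  | nil => exact ⟨R, rfl⟩
  | cons c B => rw [psi_head h]; exact ⟨_, rfl⟩

@[simp] lemma Psi_nil (w : List α) : Psi [] w = w := rfl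

@[simp] lemma Psi_cons (b : α) (u w : List α) : Psi (b :: u) w = psi b (Psi u w) := rfl

lemma Psi_append (u v w : List α) : Psi (u ++ v) w = Psi u (Psi v w) := by
  simp [Psi]

@[simp] lemma Psi_word_append (u v w : List α) : Psi u (v ++ w) = Psi u v ++ Psi u w := by
  induction u with
  | nil => rfl
  | cons b u ih => simp [ih]

@[simp] lemma Psi_word_nil (u : List α) : Psi u ([] : List α) = [] := by
  induction u with
  | nil => rfl
  | cons b u ih => simp [ih]

lemma Psi_ne_nil (u : List α) {w : List α} (hw : w ≠ []) : Psi u w ≠ [] := by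
  induction u with
  | nil => exact hw
  | cons b u ih =>
    rw [Psi_cons]
    cases hq : Psi u w with
    | nil => exact absurd hq ih
    | cons c q =>
      by_cases hcb : c = b
      · simp [hcb, psi_cons_self]
      · simp [psi_cons_ne hcb]

/-- Justin's formula for the palindromic prefix of a concatenated directive word. -/
lemma Pal_append (u v : List α) : Pal (u ++ v) = Psi u (Pal v) ++ Pal u := by
  induction u with
  | nil => simp [Pal]
  | cons b u ih => simp [Pal, ih]

lemma Psi_singleton_of_notMem {u : List α} {z : α} (h : z ∉ u) :
    Psi u [z] = Pal u ++ [z] := by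
  induction u with
  | nil => rfl
  | cons b u ih =>
    simp only [List.mem_cons, not_or] at h
    simp [ih h.2, Pal, psi_cons_ne h.1]

/-- If `z` does not occur in `v`, removing the suffix `Pal u` from `Pal (u z v)` leaves the
image of `z` under the directive word `u z v`. -/
lemma Psi_last_append_Pal {u v : List α} {z : α} (h : z ∉ v) :
    Psi (u ++ z :: v) [z] ++ Pal u = Pal (u ++ z :: v) := by
  rw [Pal_append, Psi_append, Psi_cons, Psi_singleton_of_notMem h]
  simp [Pal, psi_cons_self]

lemma Psi_replicate_self (z : α) (e : ℕ) : Psi (List.replicate e z) [z] = [z] := by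
  induction e with
  | zero => rfl
  | succ e ih => simp [List.replicate_succ, ih, psi_cons_self]

/-! ### Desubstitution -/

/-- In a `ψ_b`-image, a letter followed by `b` ends a block. -/
lemma desub_left {b c : α} {g A B : List α} (h : psi b g = A ++ c :: b :: B) :
    ∃ A' g', g = A' ++ c :: g' ∧ psi b (A' ++ [c]) = A ++ [c] ∧ psi b g' = b :: B := by
  induction g generalizing A with
  | nil => simp at h
  | cons z g ih =>
    by_cases hz : z = b
    · subst hz
      rw [psi_cons_self] at h
      cases A with
      | nil =>
        simp only [List.nil_append, List.cons.injEq] at h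
        obtain ⟨rfl, h⟩ := h
        exact ⟨[], g, rfl, by simp [psi_cons_self], h⟩
      | cons e A =>
        simp only [List.cons_append, List.cons.injEq] at h
        obtain ⟨rfl, h⟩ := h
        obtain ⟨A', g', rfl, h1, h2⟩ := ih h
        exact ⟨z :: A', g', rfl, by simp only [List.cons_append, psi_cons_self, h1], h2⟩
    · rw [psi_cons_ne hz] at h
      rcases A with _ | ⟨e, _ | ⟨e', A⟩⟩
      · simp only [List.nil_append, List.cons.injEq] at h
        exact absurd h.2.1 hz
      · simp only [List.cons_append, List.nil_append, List.cons.injEq] at h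
        obtain ⟨rfl, rfl, h⟩ := h
        exact ⟨[], g, rfl, by simp [psi_cons_ne hz], h⟩
      · simp only [List.cons_append, List.cons.injEq] at h
        obtain ⟨rfl, rfl, h⟩ := h
        obtain ⟨A', g', rfl, h1, h2⟩ := ih h
        exact ⟨z :: A', g', rfl, by simp only [List.cons_append, psi_cons_ne hz, h1], h2⟩

/-- In a `ψ_b`-image, a letter `y ≠ b` ends a block, which is the block of `y`. -/
lemma desub_letter {b y : α} (hy : y ≠ b) {g A B : List α} (h : psi b g = A ++ y :: B) :
    ∃ A' B', g = A' ++ y :: B' ∧ psi b (A' ++ [y]) = A ++ [y] := by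
  induction g generalizing A with
  | nil => simp at h
  | cons z g ih =>
    by_cases hz : z = b
    · subst hz
      rw [psi_cons_self] at h
      cases A with
      | nil =>
        simp only [List.nil_append, List.cons.injEq] at h
        exact absurd h.1.symm hy
      | cons e A =>
        simp only [List.cons_append, List.cons.injEq] at h
        obtain ⟨rfl, h⟩ := h
        obtain ⟨A', g', rfl, h1⟩ := ih h
        exact ⟨z :: A', g', rfl, by simp only [List.cons_append, psi_cons_self, h1]⟩
    · rw [psi_cons_ne hz] at h
      rcases A with _ | ⟨e, _ | ⟨e', A⟩⟩
      · simp only [List.nil_append, List.cons.injEq] at h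
        exact absurd h.1.symm hy
      · simp only [List.cons_append, List.nil_append, List.cons.injEq] at h
        obtain ⟨rfl, rfl, h⟩ := h
        exact ⟨[], g, rfl, by simp [psi_cons_ne hz]⟩
      · simp only [List.cons_append, List.cons.injEq] at h
        obtain ⟨rfl, rfl, h⟩ := h
        obtain ⟨A', g', rfl, h1⟩ := ih h
        exact ⟨z :: A', g', rfl, by simp only [List.cons_append, psi_cons_ne hz, h1]⟩

/-- Unique parsing of a `ψ_b`-image from a block boundary: the word `ψ_b(W) b c` can only be
read from `W c`. -/
lemma desub_right {b c : α} {g W B : List α} (h : psi b g = psi b W ++ b :: c :: B) :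
    ∃ B', g = W ++ c :: B' := by
  induction W generalizing g with
  | nil =>
    cases g with
    | nil => simp at h
    | cons z g =>
      by_cases hz : z = b
      · subst hz
        rw [psi_cons_self] at h
        simp only [psi_nil, List.nil_append, List.cons.injEq, true_and] at h
        exact ⟨g, by rw [psi_head h]; rfl⟩
      · rw [psi_cons_ne hz] at h
        simp only [psi_nil, List.nil_append, List.cons.injEq, true_and] at h
        exact ⟨g, by rw [h.1]; rfl⟩
  | cons z W ih =>
    cases g with
    | nil => simp at h
    | cons z' g =>
      by_cases hz : z = b
      · subst hz
        obtain ⟨R', hR⟩ := psi_append_cons_head z W (c :: B)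
        by_cases hz' : z' = z
        · subst hz'
          simp only [psi_cons_self, List.cons_append, List.cons.injEq, true_and] at h
          obtain ⟨B', rfl⟩ := ih h
          exact ⟨B', rfl⟩
        · rw [psi_cons_self, psi_cons_ne hz', List.cons_append, hR] at h
          simp only [List.cons.injEq, true_and] at h
          exact absurd h.1 hz'
      · rw [psi_cons_ne hz] at h
        by_cases hz' : z' = b
        · subst hz'
          simp only [psi_cons_self, List.cons_append, List.cons.injEq, true_and] at h
          exact absurd (psi_head h) hz
        · simp only [psi_cons_ne hz', List.cons_append, List.cons.injEq, true_and] at h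
          obtain ⟨rfl, h⟩ := h
          obtain ⟨B', rfl⟩ := ih h
          exact ⟨B', rfl⟩

/-- An occurrence of `c · Pal u · c'` in a `ψ_u`-image comes from an occurrence of `cc'`. -/
lemma Desub_pair {u : List α} {c c' : α} {g A B : List α}
    (h : Psi u g = A ++ c :: (Pal u ++ c' :: B)) :
    ∃ A' B', g = A' ++ c :: c' :: B' ∧ Psi u (A' ++ [c]) = A ++ [c] := by
  induction u generalizing A B with
  | nil => exact ⟨A, B, h, rfl⟩
  | cons b u ih =>
    obtain ⟨R', hR⟩ := psi_append_cons_head b (Pal u) (c' :: B)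
    have h' : psi b (Psi u g) = A ++ c :: b :: R' := by
      rw [← hR, ← Psi_cons, h]; simp [Pal]
    obtain ⟨A1, g1, e1, e2, e3⟩ := desub_left h'
    rw [← hR] at e3
    obtain ⟨B1, rfl⟩ := desub_right e3
    obtain ⟨A', B', rfl, e4⟩ := ih e1
    exact ⟨A', B', rfl, by rw [Psi_cons, e4, e2]⟩

/-- A letter outside the directive word `u` occurs in a `ψ_u`-image only as the end of its
own block. -/
lemma Desub_letter {u : List α} {y : α} (hy : y ∉ u) {g A B : List α}
    (h : Psi u g = A ++ y :: B) :
    ∃ A' B', g = A' ++ y :: B' ∧ Psi u (A' ++ [y]) = A ++ [y] := by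
  induction u generalizing A B with
  | nil => exact ⟨A, B, h, rfl⟩
  | cons b u ih =>
    simp only [List.mem_cons, not_or] at hy
    obtain ⟨A1, B1, e1, e2⟩ := desub_letter hy.1 h
    obtain ⟨A', B', rfl, e3⟩ := ih hy.2 e1
    exact ⟨A', B', rfl, by rw [Psi_cons, e3, e2]⟩

/-- If `y ∉ v`, every occurrence of `y · Pal u · y` in a word directed by `u y v` marks an
occurrence of the letter `y` in the underlying word. -/
lemma Desub_mark {u v : List α} {y : α} (hy : y ∉ v) {g A B : List α}
    (h : Psi (u ++ y :: v) g = A ++ y :: (Pal u ++ y :: B)) :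
    ∃ A' B', g = A' ++ y :: B' ∧ Psi (u ++ y :: v) (A' ++ [y]) = A ++ [y] := by
  rw [Psi_append] at h
  obtain ⟨A1, B1, e1, e2⟩ := Desub_pair h
  obtain ⟨A2, g2, e3, e4, -⟩ := desub_left e1
  obtain ⟨A', B', rfl, e5⟩ := Desub_letter hy e3
  exact ⟨A', B', rfl, by rw [Psi_append, Psi_cons, e5, e4, e2]⟩

/-- The letter `x` separates: two occurrences of `y ≠ x` in a `ψ_x`-image have an `x`
between them. -/
lemma separating {x y : α} (hxy : y ≠ x) {g A B A' B' : List α}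
    (h : psi x g = A ++ y :: B) (h' : psi x g = A' ++ y :: B') (hlt : A.length < A'.length) :
    ∃ C, A' = A ++ y :: x :: C := by
  obtain ⟨A1, B1, rfl, e⟩ := desub_letter hxy h
  have hB : B = psi x B1 := by
    have := h
    rw [show A1 ++ y :: B1 = (A1 ++ [y]) ++ B1 by simp, psi_append, e] at this
    simpa using this.symm
  rw [h, List.append_eq_append_iff] at h'
  rcases h' with ⟨C, rfl, h2⟩ | ⟨C, rfl, -⟩
  · rcases C with _ | ⟨c, _ | ⟨c', C⟩⟩
    · simp at hlt
    · simp only [List.cons_append, List.nil_append, List.cons.injEq] at h2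
      rw [hB] at h2
      exact absurd (psi_head h2.2) hxy
    · simp only [List.cons_append, List.cons.injEq] at h2
      obtain ⟨rfl, h2⟩ := h2
      rw [hB] at h2
      exact ⟨C, by rw [psi_head h2]⟩
  · simp at hlt

/-- Two occurrences of the marker `y · Pal u · y` in a word directed by `u y v x` (with
`y ∉ v` and `y ≠ x`) are further apart than the image of `x`. -/
lemma mark_gap {u v : List α} {x y : α} (hy : y ∉ v) (hxy : y ≠ x) {g A B A' B' : List α}
    (h : Psi (u ++ y :: v) (psi x g) = A ++ y :: (Pal u ++ y :: B))
    (h' : Psi (u ++ y :: v) (psi x g) = A' ++ y :: (Pal u ++ y :: B'))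
    (hlt : A.length < A'.length) :
    A.length + (Psi (u ++ y :: v) [x]).length < A'.length := by
  obtain ⟨A1, B1, e1, e2⟩ := Desub_mark hy h
  obtain ⟨A2, B2, e3, e4⟩ := Desub_mark hy h'
  set U := u ++ y :: v
  have l2 := congrArg List.length e2
  have l4 := congrArg List.length e4
  have hne : 0 < (Psi U [y]).length := List.length_pos_iff.2 (Psi_ne_nil U (by simp))
  have hlt' : A1.length < A2.length := by
    by_contra hge
    have hpre : A2 <+: A1 :=
      List.prefix_of_prefix_length_le (l₃ := psi x g) ⟨_, e3.symm⟩ ⟨_, e1.symm⟩ (by omega)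
    obtain ⟨C, rfl⟩ := hpre
    simp only [Psi_word_append, List.length_append] at l2 l4
    omega
  obtain ⟨C, rfl⟩ := separating hxy e1 e3 hlt'
  rw [show A1 ++ y :: x :: C = A1 ++ [y] ++ [x] ++ C by simp] at l4
  simp only [Psi_word_append, List.length_append, List.length_singleton] at l2 l4
  omega

/-! ### The words `s_n` and `D_n` in terms of directive words -/

/-- The `i`-th letter (from `0`) of the periodic sequence `a_1, …, a_k, a_1, …`. -/
def letter (k : ℕ) (a : ℕ → α) (i : ℕ) : α := a (i % k + 1)

/-- The segment `a_{j+1}^{d_{j+1}} ⋯ a_{j+i}^{d_{j+i}}` of the directive word, with letters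
indexed periodically. -/
def seg (k : ℕ) (a : ℕ → α) (d : ℕ → ℕ) (j : ℕ) : ℕ → List α
  | 0 => []
  | i + 1 => seg k a d j i ++ List.replicate (d (j + i + 1)) (letter k a (j + i))

/-- The product `s_{n-1}^{d_n} s_{n-2}^{d_{n-1}} ⋯` with `i` factors. -/
def part (k : ℕ) (a : ℕ → α) (d : ℕ → ℕ) (n i : ℕ) : List α :=
  ((List.range i).map (fun j => pw (s k a d (n - 1 - j)) (d (n - j)))).flatten

lemma seg_add (k : ℕ) (a : ℕ → α) (d : ℕ → ℕ) (j i l : ℕ) :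
    seg k a d j (i + l) = seg k a d j i ++ seg k a d (j + i) l := by
  induction l with
  | zero => simp [seg]
  | succ l ih => rw [← add_assoc, seg, ih, seg]; simp [add_assoc]

lemma mem_seg {k : ℕ} {a : ℕ → α} {d : ℕ → ℕ} {j i : ℕ} {z : α} (h : z ∈ seg k a d j i) :
    ∃ l < i, z = letter k a (j + l) := by
  induction i with
  | zero => simp [seg] at h
  | succ i ih =>
    rw [seg, List.mem_append] at h
    rcases h with h | h
    · obtain ⟨l, hl, e⟩ := ih h
      exact ⟨l, by omega, e⟩
    · exact ⟨i, by omega, List.eq_of_mem_replicate h⟩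

lemma pw_succ (w : List α) (p : ℕ) : pw w (p + 1) = w ++ pw w p := rfl

lemma pw_pos {p : ℕ} (hp : 1 ≤ p) (w : List α) : pw w p = w ++ pw w (p - 1) := by
  obtain ⟨q, rfl⟩ := Nat.exists_eq_add_of_le' hp
  rfl

lemma pw_pos_comm {p : ℕ} (hp : 1 ≤ p) (w : List α) : pw w p = pw w (p - 1) ++ w := by
  obtain ⟨q, rfl⟩ := Nat.exists_eq_add_of_le' hp
  simp only [Nat.add_sub_cancel]
  induction q with
  | zero => simp [pw]
  | succ q ih =>
    conv_lhs => rw [pw_succ, ih (by omega)]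
    rw [pw_succ, List.append_assoc]

lemma part_succ (k : ℕ) (a : ℕ → α) (d : ℕ → ℕ) (n i : ℕ) :
    part k a d (n + 1) (i + 1) = pw (s k a d n) (d (n + 1)) ++ part k a d n i := by
  simp only [part, List.range_succ_eq_map, List.map_cons, List.flatten_cons, List.map_map]
  congr 3
  · funext j
    simp only [Function.comp, Nat.succ_eq_add_one]
    congr 2 <;> omega

lemma part_zero (k : ℕ) (a : ℕ → α) (d : ℕ → ℕ) (n : ℕ) : part k a d n 0 = [] := rfl

lemma D_eq (k : ℕ) (a : ℕ → α) (d : ℕ → ℕ) (n : ℕ) :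
    D k a d n = pw (s k a d n) (d (n + 1) - 1) ++ part k a d n n := rfl

lemma part_add (k : ℕ) (a : ℕ → α) (d : ℕ → ℕ) (n i l : ℕ) (h : i ≤ n) :
    part k a d n (i + l) = part k a d n i ++ part k a d (n - i) l := by
  induction i generalizing n with
  | zero => simp [part_zero]
  | succ i ih =>
    obtain ⟨n, rfl⟩ := Nat.exists_eq_add_of_le' (show 1 ≤ n by omega)
    rw [show i + 1 + l = (i + l) + 1 by omega, part_succ, part_succ, ih n (by omega)]
    simp

/-- Factors of `part` beyond the `n`-th are empty, since `d_0 = 0`. -/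
lemma part_of_le {k : ℕ} {a : ℕ → α} {d : ℕ → ℕ} (hd0 : d 0 = 0) {n i : ℕ} (h : n ≤ i) :
    part k a d n i = part k a d n n := by
  obtain ⟨l, rfl⟩ := Nat.exists_eq_add_of_le h
  rw [part_add _ _ _ _ _ _ le_rfl]
  simp [part, hd0, pw]

section Structure

variable {k : ℕ} {a : ℕ → α} {d : ℕ → ℕ}

lemma S_lt (hk : 2 ≤ k) {m : ℕ} (hm : m < k) : S k a d m = [letter k a (m + 1)] := by
  rw [S, dif_pos (by omega)]; rfl

lemma s_succ (hk : 2 ≤ k) (hd0 : d 0 = 0) (n : ℕ) :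
    s k a d (n + 1) = part k a d (n + 1) (k - 1) ++ S k a d n := by
  rw [s, S, dif_neg (by omega), part]
  congr 3
  · funext j
    rw [show n + 1 + (k - 1) + 1 - k - j = n + 1 - j by omega]
    rcases Nat.lt_or_ge j (n + 1) with h | h
    · rw [s, show n + 1 + (k - 1) - 1 - j = n + 1 - 1 - j + (k - 1) by omega]
    · rw [show n + 1 - j = 0 by omega, hd0]; rfl
  · omega

lemma s_small (hk : 2 ≤ k) (hd0 : d 0 = 0) {n : ℕ} (hn : n < k) :
    s k a d n = part k a d n n ++ [letter k a n] := by
  cases n with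
  | zero =>
    rw [s, S_lt hk (by omega), part_zero]
    simp [letter, show k - 1 + 1 = k by omega]
  | succ n => rw [s_succ hk hd0, S_lt hk (by omega), part_of_le hd0 (by omega)]

lemma s_large (hk : 2 ≤ k) (hd0 : d 0 = 0) (n : ℕ) :
    s k a d (n + k) = part k a d (n + k) (k - 1) ++ s k a d n := by
  rw [show n + k = (n + (k - 1)) + 1 by omega, s_succ hk hd0, ← s]

lemma part_large (hk : 2 ≤ k) (hd0 : d 0 = 0) (hd : ∀ i, 1 ≤ i → 1 ≤ d i) (n : ℕ) :
    part k a d (n + k) (n + k) = s k a d (n + k) ++ D k a d n := by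
  rw [s_large hk hd0]
  conv_lhs => rw [show part k a d (n + k) (n + k) = part k a d (n + k) ((k - 1) + (n + 1)) by
    congr 1; omega]
  rw [part_add _ _ _ _ _ _ (by omega), show n + k - (k - 1) = n + 1 by omega, part_succ,
    pw_pos (hd _ (by omega)), D_eq]
  simp

lemma s_pre_succ (hk : 2 ≤ k) (hd0 : d 0 = 0) (hd : ∀ i, 1 ≤ i → 1 ≤ d i) (n : ℕ) :
    s k a d n <+: s k a d (n + 1) := by
  rw [s_succ hk hd0, show k - 1 = (k - 2) + 1 by omega, part_succ, pw_pos (hd _ (by omega))]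
  exact ⟨_, by rw [List.append_assoc, List.append_assoc]⟩

lemma s_pre_of_le (hk : 2 ≤ k) (hd0 : d 0 = 0) (hd : ∀ i, 1 ≤ i → 1 ≤ d i) {m n : ℕ}
    (h : m ≤ n) : s k a d m <+: s k a d n := by
  induction n, h using Nat.le_induction with
  | base => exact List.prefix_rfl
  | succ n _ ih => exact ih.trans (s_pre_succ hk hd0 hd n)

lemma S_ne_nil (hk : 2 ≤ k) (m : ℕ) : S k a d m ≠ [] := by
  induction m using Nat.strong_induction_on with
  | _ m ih =>
    by_cases h : m < k
    · simp [S_lt hk h]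
    · rw [S, dif_neg (by omega)]
      exact List.append_ne_nil_of_right_ne_nil _ (ih _ (by omega))

lemma le_length_s (hk : 2 ≤ k) (hd0 : d 0 = 0) (hd : ∀ i, 1 ≤ i → 1 ≤ d i) (n : ℕ) :
    n ≤ (s k a d n).length := by
  induction n with
  | zero => simp
  | succ n ih =>
    rw [s_succ hk hd0, show k - 1 = (k - 2) + 1 by omega, part_succ, pw_pos (hd _ (by omega))]
    have := List.length_pos_iff.2 (S_ne_nil (a := a) (d := d) hk n)
    simp only [List.length_append]
    omega

lemma letter_add_k (n : ℕ) : letter k a (n + k) = letter k a n := by simp [letter]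

lemma letter_ne (hk : 2 ≤ k)
    (ha : ∀ i j, 1 ≤ i → i ≤ k → 1 ≤ j → j ≤ k → a i = a j → i = j) {i l : ℕ}
    (h0 : 0 < l) (h1 : l < k) : letter k a i ≠ letter k a (i + l) := by
  intro h
  have m1 := Nat.mod_lt i (show 0 < k by omega)
  have m2 := Nat.mod_lt (i + l) (show 0 < k by omega)
  have := ha _ _ (by omega) (by omega) (by omega) (by omega) h
  have h3 : i ≡ i + l [MOD k] := by unfold Nat.ModEq; omega
  have h4 : (0 : ℕ) ≡ l [MOD k] := Nat.ModEq.add_left_cancel' i h3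
  rw [Nat.ModEq, Nat.mod_eq_of_lt h1] at h4
  simp at h4
  omega

lemma letter_notMem_seg (hk : 2 ≤ k)
    (ha : ∀ i j, 1 ≤ i → i ≤ k → 1 ≤ j → j ≤ k → a i = a j → i = j) {j i : ℕ}
    (hi : i < k) : letter k a j ∉ seg k a d (j + 1) i := by
  intro h
  obtain ⟨l, hl, e⟩ := mem_seg h
  rw [add_assoc] at e
  exact letter_ne hk ha (by omega) (by omega) e

/-- The directive word `a_{j+1}^{d_{j+1}} ⋯` split around the last copy of its first
letter `a_{j+1}` in the first block. -/
lemma seg_split (hd : ∀ i, 1 ≤ i → 1 ≤ d i) (j i : ℕ) :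
    seg k a d 0 (j + 1 + i) = (seg k a d 0 j ++ List.replicate (d (j + 1) - 1) (letter k a j)) ++
      letter k a j :: seg k a d (j + 1) i := by
  rw [seg_add, seg, Nat.zero_add, Nat.zero_add]
  obtain ⟨e, he⟩ := Nat.exists_eq_add_of_le' (hd (j + 1) (by omega))
  rw [he, List.replicate_succ', Nat.add_sub_cancel]
  simp

lemma Pal_append_replicate (u : List α) (z : α) (e : ℕ) :
    Pal (u ++ List.replicate e z) = pw (Psi u [z]) e ++ Pal u := by
  induction e with
  | zero => simp [pw]
  | succ e ih =>
    rw [List.replicate_succ', ← List.append_assoc, Pal_append, ih, Psi_append]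
    simp [Pal, Psi_replicate_self, pw_succ]

/-- The images of the letters under the morphism directed by `a_1^{d_1} ⋯ a_n^{d_n}`: the
next letter `a_{n+1}` is sent to `s_n`, and the palindromic prefix is
`s_{n-1}^{d_n} ⋯ s_0^{d_1}`. -/
lemma Psi_seg (hk : 2 ≤ k)
    (ha : ∀ i j, 1 ≤ i → i ≤ k → 1 ≤ j → j ≤ k → a i = a j → i = j)
    (hd0 : d 0 = 0) (hd : ∀ i, 1 ≤ i → 1 ≤ d i) (n : ℕ) :
    Psi (seg k a d 0 n) [letter k a n] = s k a d n ∧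
      Pal (seg k a d 0 n) = part k a d n n := by
  induction n using Nat.strong_induction_on with
  | _ n ih =>
    have hPal : Pal (seg k a d 0 n) = part k a d n n := by
      cases n with
      | zero => rfl
      | succ n =>
        obtain ⟨h1, h2⟩ := ih n (by omega)
        rw [seg, Nat.zero_add, Pal_append_replicate, h1, h2, part_succ]
    refine ⟨?_, hPal⟩
    rcases Nat.lt_or_ge n k with h | h
    · have hmem : letter k a n ∉ seg k a d 0 n := by
        intro hm
        obtain ⟨l, hl, e⟩ := mem_seg hm
        have := letter_ne hk ha (i := l) (l := n - l) (by omega) (by omega)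
        rw [show l + (n - l) = n by omega] at this
        rw [Nat.zero_add] at e
        exact this e.symm
      rw [Psi_singleton_of_notMem hmem, hPal, s_small hk hd0 h]
    · obtain ⟨j, rfl⟩ := Nat.exists_eq_add_of_le' h
      obtain ⟨h1, h2⟩ := ih j (by omega)
      have hsplit := seg_split (k := k) (a := a) hd j (k - 1)
      rw [show j + 1 + (k - 1) = j + k by omega] at hsplit
      have key := Psi_last_append_Pal (u := seg k a d 0 j ++
        List.replicate (d (j + 1) - 1) (letter k a j))
        (letter_notMem_seg (d := d) hk ha (j := j) (i := k - 1) (by omega))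
      rw [← hsplit, hPal, Pal_append_replicate, h1, h2, part_large hk hd0 hd, ← D_eq] at key
      rw [letter_add_k]
      exact List.append_cancel_right key

/-- `s_{m+1}` starts with `D_m` followed by the letter `a_{m+1}`. -/
lemma D_letter_pre (hk : 2 ≤ k) (hd0 : d 0 = 0) (hd : ∀ i, 1 ≤ i → 1 ≤ d i) (m : ℕ) :
    D k a d m ++ [letter k a m] <+: s k a d (m + 1) := by
  induction m using Nat.strong_induction_on with
  | _ m ih =>
    rw [s_succ hk hd0, show k - 1 = (k - 2) + 1 by omega, part_succ,
      pw_pos_comm (hd _ (by omega)), D_eq, List.append_assoc, List.append_assoc,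
      List.append_assoc, List.prefix_append_right_inj]
    rcases Nat.lt_or_ge m k with h | h
    · rw [s_small hk hd0 h]
      exact List.prefix_append _ _
    · obtain ⟨j, rfl⟩ := Nat.exists_eq_add_of_le' h
      rw [part_large hk hd0 hd, letter_add_k, List.append_assoc, List.prefix_append_right_inj]
      have h1 := ih j (by omega)
      -- What follows `s_m` starts with `s_{m-1}` if `k > 2` and is `s_{m-1}` if `k = 2`.
      rcases Nat.lt_or_ge 2 k with h2 | h2
      · have h3 := h1.trans (s_pre_of_le hk hd0 hd (show j + 1 ≤ j + k - 1 by omega))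
        rw [show part k a d (j + k) (k - 2) = part k a d (j + k - 1 + 1) (k - 3 + 1) by
          congr 1 <;> omega, part_succ, pw_pos (hd _ (by omega)), List.append_assoc,
          List.append_assoc]
        exact h3.trans (List.prefix_append _ _)
      · obtain rfl : k = 2 := by omega
        exact h1

/-- The marker `a_m D_{m-1} a_m` (with `m = j+1`) occurs in the `s_N` only with gaps larger
than `|s_n|`, for `m ≤ n ≤ m + k - 2`. -/
lemma marker_gap (hk : 2 ≤ k)
    (ha : ∀ i j, 1 ≤ i → i ≤ k → 1 ≤ j → j ≤ k → a i = a j → i = j)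
    (hd0 : d 0 = 0) (hd : ∀ i, 1 ≤ i → 1 ≤ d i) {j i N : ℕ} (hi : i + 1 < k)
    (hN : j + 1 + i < N) {A B A' B' : List α}
    (h : s k a d N = A ++ letter k a j :: (D k a d j ++ letter k a j :: B))
    (h' : s k a d N = A' ++ letter k a j :: (D k a d j ++ letter k a j :: B'))
    (hlt : A.length < A'.length) :
    A.length + (s k a d (j + 1 + i)).length < A'.length := by
  obtain ⟨h1, h2⟩ := Psi_seg hk ha hd0 hd j
  have hD : D k a d j =
      Pal (seg k a d 0 j ++ List.replicate (d (j + 1) - 1) (letter k a j)) := by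
    rw [Pal_append_replicate, h1, h2, D_eq]
  obtain ⟨l, rfl⟩ := Nat.exists_eq_add_of_le (show j + 1 + i + 1 ≤ N by omega)
  have hs : s k a d (j + 1 + i + 1 + l) = Psi (seg k a d 0 (j + 1 + i))
      (psi (letter k a (j + 1 + i)) (Psi (List.replicate (d (j + 1 + i + 1) - 1)
        (letter k a (j + 1 + i)) ++ seg k a d (j + 1 + i + 1) l)
          [letter k a (j + 1 + i + 1 + l)])) := by
    rw [← (Psi_seg hk ha hd0 hd _).1, seg_add, seg, Nat.zero_add, Nat.zero_add]
    obtain ⟨e, he⟩ := Nat.exists_eq_add_of_le' (hd (j + 1 + i + 1) (by omega))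
    rw [he, Nat.add_sub_cancel, List.replicate_succ, List.append_assoc, Psi_append]
    simp
  have hgap := mark_gap (x := letter k a (j + 1 + i))
    (u := seg k a d 0 j ++ List.replicate (d (j + 1) - 1) (letter k a j))
    (letter_notMem_seg (d := d) hk ha (j := j) (i := i) (by omega))
    (by rw [add_assoc]; exact letter_ne hk ha (by omega) (by omega))
    (by rw [← seg_split hd, ← hs, ← hD]; exact h)
    (by rw [← seg_split hd, ← hs, ← hD]; exact h') hlt
  rwa [← seg_split hd, (Psi_seg hk ha hd0 hd _).1] at hgap

end Structure

/-! ### Singular words contain the marker -/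

/-- A window of length `|D| + |G|` in `reverse(G) D G` that avoids the first and the last
letter contains the central factor `y D y`, where `y` is the first letter of `G = yG'`. -/
lemma window_contains {Dw G' w : List α} {y : α} (hlen : w.length = Dw.length + G'.length + 1)
    (hw : w <:+: ((((y :: G').reverse ++ Dw ++ y :: G').drop 1).dropLast)) :
    ∃ P Q, w = P ++ y :: (Dw ++ y :: Q) := by
  obtain ⟨u, v, h⟩ := hw
  have hX : (y :: G').reverse ++ Dw ++ y :: G' = G'.reverse ++ (y :: (Dw ++ y :: G')) := by
    simp
  rw [hX] at h
  generalize hZ : G'.reverse ++ (y :: (Dw ++ y :: G')) = Z at h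
  have hZl : Z.length = 2 * G'.length + Dw.length + 2 := by
    rw [← hZ]; simp; omega
  have hl := congrArg List.length h
  simp only [List.length_append, List.length_dropLast, List.length_drop] at hl
  have hw' : w = (Z.drop (u.length + 1)).take w.length := by
    have h3 : (Z.drop 1).dropLast = (Z.drop 1).take (Z.length - 1 - 1) := by
      rw [List.dropLast_eq_take, List.length_drop]
    rw [h3] at h
    have h4 : w = (((Z.drop 1).take (Z.length - 1 - 1)).drop u.length).take w.length := by
      rw [← h]; simp
    rw [List.drop_take, List.take_take, List.drop_drop, min_eq_left (by omega)] at h4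
    rwa [add_comm 1] at h4
  rw [← hZ, List.drop_append_of_le_length (by simp; omega), List.take_append,
    List.take_of_length_le (by simp; omega)] at hw'
  generalize hP : G'.reverse.drop (u.length + 1) = P at hw'
  have hPl : P.length = G'.length - (u.length + 1) := by rw [← hP]; simp
  refine ⟨P, G'.take (w.length - P.length - 1 - Dw.length - 1), hw'.trans ?_⟩
  obtain ⟨c, hc⟩ := Nat.exists_eq_add_of_le
    (show 1 + Dw.length + 1 ≤ w.length - P.length by omega)
  rw [hc, show 1 + Dw.length + 1 + c = (Dw.length + (c + 1)) + 1 by omega, List.take_succ_cons,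
    List.take_length_add_append, List.take_succ_cons]
  congr 5
  omega

/-- An occurrence of `w` in the limit word `f` yields a decomposition of every long `s_N`. -/
lemma occ_split {k : ℕ} {a : ℕ → α} {d : ℕ → ℕ} {f : ℕ → α}
    (hf : ∀ N, (List.range (s k a d N).length).map f = s k a d N) {w : List α} {p N : ℕ}
    (hp : (List.range w.length).map (fun t => f (p + t)) = w)
    (hN : p + w.length ≤ (s k a d N).length) :
    ∃ A B, A.length = p ∧ s k a d N = A ++ w ++ B := by
  obtain ⟨c, hc⟩ := Nat.exists_eq_add_of_le hN
  refine ⟨(List.range p).map f, (List.range c).map (fun t => f (p + w.length + t)), by simp, ?_⟩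
  conv_rhs => rw [← hp]
  rw [← hf N, hc, List.range_add, List.range_add]
  simp [Function.comp_def]

theorem stmt13 {α : Type*} (k : ℕ) (hk : 2 ≤ k) (a : ℕ → α)
    (ha : ∀ i j, 1 ≤ i → i ≤ k → 1 ≤ j → j ≤ k → a i = a j → i = j)
    (d : ℕ → ℕ) (hd0 : d 0 = 0) (hd : ∀ i, 1 ≤ i → 1 ≤ d i)
    (f : ℕ → α) (hf : ∀ N, (List.range (s k a d N).length).map f = s k a d N)
    (n r : ℕ) (hn : k - 1 ≤ n) (hr1 : 1 ≤ r) (hrk : r ≤ k - 1)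
    (w : List α) (hw : w ∈ Om k a d n r) (p q : ℕ)
    (hp : (List.range w.length).map (fun t => f (p + t)) = w)
    (hq : (List.range w.length).map (fun t => f (q + t)) = w)
    (hpq : p < q) :
    p + w.length < q := by
  obtain ⟨i, rfl⟩ := Nat.exists_eq_add_of_le' hr1
  obtain ⟨j, rfl⟩ := Nat.exists_eq_add_of_le (show i + 1 ≤ n by omega)
  obtain ⟨hwl, hwin⟩ := hw
  have hpre := (D_letter_pre (a := a) hk hd0 hd j).trans
    (s_pre_of_le hk hd0 hd (show j + 1 ≤ i + 1 + j by omega))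
  obtain ⟨G', hG'⟩ := hpre
  have hG : G k a d (i + 1 + j) (i + 1) = letter k a j :: G' := by
    rw [G, ← hG', show i + 1 + j - (i + 1) = j by omega]
    simp
  rw [hG, show i + 1 + j - (i + 1) = j by omega] at hwin
  obtain ⟨P, Q, hPQ⟩ := window_contains
    (by rw [hwl, ← hG']; simp only [List.length_append, List.length_singleton]; omega) hwin
  have hL := le_length_s (a := a) hk hd0 hd (q + w.length + (j + 1 + i) + 1)
  obtain ⟨A, B, hA, hAB⟩ := occ_split hf hp
    (N := q + w.length + (j + 1 + i) + 1) (by omega)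
  obtain ⟨A', B', hA', hAB'⟩ := occ_split hf hq
    (N := q + w.length + (j + 1 + i) + 1) (by omega)
  have hgap := marker_gap hk ha hd0 hd (j := j) (i := i)
    (N := q + w.length + (j + 1 + i) + 1) (A := A ++ P) (A' := A' ++ P)
    (B := Q ++ B) (B' := Q ++ B') (by omega) (by omega) (by rw [hAB, hPQ]; simp)
    (by rw [hAB', hPQ]; simp) (by simp only [List.length_append]; omega)
  rw [show j + 1 + i = i + 1 + j by omega, ← hwl] at hgap
  simp only [List.length_append] at hgap
  omega

end Epi
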